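/- arXiv:math/0408204 — 2 statements merged into one kernel-verified Lean document; each statement's English description precedes it below -/
import Mathlib

section
/- Let n ≥ 1 and let x_1,...,x_{2n}, a_1,...,a_{2n}, c_1,...,c_{2n} be variables with the x_i pairwise distinct. Then Pf[ (a_i − a_j)(c_i − c_j)/(x_i − x_j) ]_{1≤i<j≤2n} = V^n(X,1;A,1) · V^n(X,1;C,1) / Π_{1≤i<j≤2n}(x_i − x_j), where V^n(X,1;A,1) is the determinant of the 2n×2n matrix whose (i,j) entry is a_i x_i^{n−j} for 1≤j≤n and x_i^{2n−j} for n+1≤j≤2n. -/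
open Finset

def pfMatchings (n : ℕ) : Finset (Equiv.Perm (Fin (2 * n))) :=
  Finset.univ.filter (fun σ =>
    (∀ i : Fin n, σ ⟨2 * i.1, by have := i.2; omega⟩ < σ ⟨2 * i.1 + 1, by have := i.2; omega⟩) ∧
    (∀ i j : Fin n, i < j →
      σ ⟨2 * i.1, by have := i.2; omega⟩ < σ ⟨2 * j.1, by have := j.2; omega⟩))

def pf {R : Type*} [CommRing R] {n : ℕ} (A : Matrix (Fin (2 * n)) (Fin (2 * n)) R) : R :=
  ∑ σ ∈ pfMatchings n,
    ((Equiv.Perm.sign σ : ℤ) : R) *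
      ∏ i : Fin n,
        A (σ ⟨2 * i.1, by have := i.2; omega⟩) (σ ⟨2 * i.1 + 1, by have := i.2; omega⟩)

/-- `V^n(X,Y;A,B)`: the determinant of the `2n × 2n` matrix whose `(i,j)` entry
(0-indexed columns) is `a_i x_i^{n−1−j} y_i^j` for `j < n` and
`b_i x_i^{2n−1−j} y_i^{j−n}` for `n ≤ j < 2n`. -/
def Vdet {R : Type*} [CommRing R] (n : ℕ) (x y a b : Fin (2 * n) → R) : R :=
  Matrix.det (Matrix.of fun i j : Fin (2 * n) =>
    if (j : ℕ) < n then a i * x i ^ (n - 1 - (j : ℕ)) * y i ^ (j : ℕ)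
    else b i * x i ^ (2 * n - 1 - (j : ℕ)) * y i ^ ((j : ℕ) - n))

/-!
Write `Δ(x) = ∏_{i<j} (x_i − x_j)`, and order the columns of `V(x; a)` as `1, a, x, ax, x², ax², …`.
Expanding the Pfaffian along its first row reduces the claim to the same recursion for
`V(x; a) V(x; c) / Δ(x)`. Let the number of indices be `m + 2`, with `m` even. As a function of
`x_0` alone, each determinant is a polynomial of degree at most `m / 2`, so their product has
degree at most `m` and Lagrange interpolation recovers it from its values at the `m + 1` other
nodes `x_j`. When `x_0 = x_j`, subtracting `x_0` times each column from the one two places on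
leaves only the entries `1, a_0` and `1, a_j` in rows `0` and `j`, and the determinant becomes, up
to sign, `(a_j − a_0) ∏_k (x_k − x_0)` times the determinant with the indices `0` and `j` removed.
Hence the interpolation formula, divided by `Δ(x)`, is the expansion of the Pfaffian.
-/

section Permutations

variable {m : ℕ}

/-- The permutation that sends `0` to `j` and acts on the remaining indices as `τ`, these indices
being identified with `Fin m` in increasing order both in the source and in the target. -/
def insertPerm (j : Fin (m + 1)) (τ : Equiv.Perm (Fin m)) : Equiv.Perm (Fin (m + 1)) :=
  (Equiv.Perm.decomposeFin.symm (0, τ)).trans j.cycleRange.symm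

@[simp]
theorem insertPerm_zero (j : Fin (m + 1)) (τ : Equiv.Perm (Fin m)) : insertPerm j τ 0 = j := by
  simp [insertPerm]

@[simp]
theorem insertPerm_succ (j : Fin (m + 1)) (τ : Equiv.Perm (Fin m)) (k : Fin m) :
    insertPerm j τ k.succ = j.succAbove (τ k) := by
  simp [insertPerm]

theorem sign_insertPerm (j : Fin (m + 1)) (τ : Equiv.Perm (Fin m)) :
    Equiv.Perm.sign (insertPerm j τ) = (-1) ^ (j : ℕ) * Equiv.Perm.sign τ := by
  simp [insertPerm, Equiv.Perm.sign_trans, Equiv.Perm.decomposeFin.symm_sign]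

theorem insertPerm_injective :
    Function.Injective fun p : Fin (m + 1) × Equiv.Perm (Fin m) => insertPerm p.1 p.2 := by
  rintro ⟨j, τ⟩ ⟨j', τ'⟩ h
  obtain rfl : j = j' := by simpa using Equiv.congr_fun h 0
  have hτ : τ = τ' := Equiv.ext fun k => by simpa using Equiv.congr_fun h k.succ
  rw [hτ]

theorem insertPerm_bijective :
    Function.Bijective fun p : Fin (m + 1) × Equiv.Perm (Fin m) => insertPerm p.1 p.2 :=
  (Fintype.bijective_iff_injective_and_card _).2
    ⟨insertPerm_injective, by simp [Fintype.card_perm, Nat.factorial_succ]⟩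

/-- The increasing enumeration of the indices other than `0` and `j.succ`. -/
def skipPair (j : Fin (m + 1)) (k : Fin m) : Fin (m + 2) :=
  (j.succAbove k).succ

theorem skipPair_strictMono (j : Fin (m + 1)) : StrictMono (skipPair j) :=
  (Fin.strictMono_succ).comp (Fin.strictMono_succAbove j)

theorem skipPair_pos (j : Fin (m + 1)) (k : Fin m) : 0 < skipPair j k :=
  Fin.succ_pos _

/-- The permutation that sends `0` to `0` and `1` to `j.succ`, and acts on the remaining indices
as `τ`. -/
def pairPerm (j : Fin (m + 1)) (τ : Equiv.Perm (Fin m)) : Equiv.Perm (Fin (m + 2)) :=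
  insertPerm 0 (insertPerm j τ)

@[simp]
theorem pairPerm_zero (j : Fin (m + 1)) (τ : Equiv.Perm (Fin m)) : pairPerm j τ 0 = 0 :=
  insertPerm_zero _ _

@[simp]
theorem pairPerm_one (j : Fin (m + 1)) (τ : Equiv.Perm (Fin m)) : pairPerm j τ 1 = j.succ := by
  rw [← Fin.succ_zero_eq_one, pairPerm, insertPerm_succ, insertPerm_zero, Fin.succAbove_zero]

@[simp]
theorem pairPerm_succ_succ (j : Fin (m + 1)) (τ : Equiv.Perm (Fin m)) (k : Fin m) :
    pairPerm j τ k.succ.succ = skipPair j (τ k) := by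
  rw [pairPerm, insertPerm_succ, insertPerm_succ, Fin.succAbove_zero, skipPair]

theorem sign_pairPerm (j : Fin (m + 1)) (τ : Equiv.Perm (Fin m)) :
    Equiv.Perm.sign (pairPerm j τ) = (-1) ^ (j : ℕ) * Equiv.Perm.sign τ := by
  simp [pairPerm, sign_insertPerm]

theorem pairPerm_injective :
    Function.Injective fun p : Fin (m + 1) × Equiv.Perm (Fin m) => pairPerm p.1 p.2 := by
  intro p p' h
  have hpair : ((0 : Fin (m + 2)), insertPerm p.1 p.2) = (0, insertPerm p'.1 p'.2) :=
    insertPerm_injective h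
  exact insertPerm_injective (Prod.mk.inj hpair).2

theorem exists_pairPerm_eq {σ : Equiv.Perm (Fin (m + 2))} (hσ : σ 0 = 0) :
    ∃ j τ, pairPerm j τ = σ := by
  obtain ⟨⟨i, ρ⟩, rfl⟩ := insertPerm_bijective.surjective σ
  obtain ⟨⟨j, τ⟩, rfl⟩ := insertPerm_bijective.surjective ρ
  obtain rfl : i = 0 := by simpa using hσ
  exact ⟨j, τ, rfl⟩

end Permutations

section Pfaffian

variable {n : ℕ}

/-- The index of the smaller element of the `i`-th pair in the encoding used by `pfMatchings`. -/
def pairFst (i : Fin n) : Fin (2 * n) := ⟨2 * i, by omega⟩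

/-- The index of the larger element of the `i`-th pair in the encoding used by `pfMatchings`. -/
def pairSnd (i : Fin n) : Fin (2 * n) := ⟨2 * i + 1, by omega⟩

theorem pairFst_zero : pairFst (0 : Fin (n + 1)) = (0 : Fin (2 * n + 2)) := rfl

theorem pairSnd_zero : pairSnd (0 : Fin (n + 1)) = (1 : Fin (2 * n + 2)) := rfl

theorem pairFst_succ (i : Fin n) : pairFst i.succ = ((pairFst i).succ.succ : Fin (2 * n + 2)) := rfl

theorem pairSnd_succ (i : Fin n) : pairSnd i.succ = ((pairSnd i).succ.succ : Fin (2 * n + 2)) := rfl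

theorem exists_pairFst_or_pairSnd (k : Fin (2 * n)) : ∃ i, k = pairFst i ∨ k = pairSnd i :=
  ⟨⟨k / 2, by omega⟩, by simp only [pairFst, pairSnd, Fin.ext_iff]; omega⟩

theorem mem_pfMatchings {σ : Equiv.Perm (Fin (2 * n))} :
    σ ∈ pfMatchings n ↔
      (∀ i, σ (pairFst i) < σ (pairSnd i)) ∧ StrictMono fun i => σ (pairFst i) := by
  simp only [pfMatchings, mem_filter, mem_univ, true_and, StrictMono, pairFst, pairSnd]

theorem pf_eq_sum {R : Type*} [CommRing R] (A : Matrix (Fin (2 * n)) (Fin (2 * n)) R) :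
    pf A = ∑ σ ∈ pfMatchings n,
      ((Equiv.Perm.sign σ : ℤ) : R) * ∏ i, A (σ (pairFst i)) (σ (pairSnd i)) :=
  rfl

theorem pf_zero {R : Type*} [CommRing R] (A : Matrix (Fin (2 * 0)) (Fin (2 * 0)) R) :
    pf A = 1 := by
  have : IsEmpty (Fin (2 * 0)) := Fin.isEmpty
  have huniv : pfMatchings 0 = {1} :=
    eq_singleton_iff_unique_mem.2
      ⟨mem_pfMatchings.2 ⟨fun i => i.elim0, fun i => i.elim0⟩, fun σ _ => Subsingleton.elim σ 1⟩
  simp [pf_eq_sum, huniv]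

theorem apply_zero_of_mem_pfMatchings {σ : Equiv.Perm (Fin (2 * n + 2))}
    (hσ : σ ∈ pfMatchings (n + 1)) : σ 0 = 0 := by
  obtain ⟨hpair, hmono⟩ := mem_pfMatchings.1 hσ
  have hle (i : Fin (n + 1)) : σ 0 ≤ σ (pairFst i) := hmono.monotone (Fin.zero_le i)
  obtain ⟨k, hk⟩ := σ.surjective 0
  obtain ⟨i, rfl | rfl⟩ := exists_pairFst_or_pairSnd (n := n + 1) k
  · exact le_antisymm (hk ▸ hle i) (Fin.zero_le _)
  · exact absurd (hk ▸ hpair i) (Fin.not_lt_zero _)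

theorem pairPerm_mem_pfMatchings {j : Fin (2 * n + 1)} {τ : Equiv.Perm (Fin (2 * n))} :
    pairPerm j τ ∈ pfMatchings (n + 1) ↔ τ ∈ pfMatchings n := by
  refine (mem_pfMatchings (n := n + 1)).trans ?_
  simp [mem_pfMatchings, StrictMono, Fin.forall_fin_succ, pairFst_zero, pairSnd_zero, pairFst_succ,
    pairSnd_succ, skipPair_pos, (skipPair_strictMono j).lt_iff_lt]

theorem pf_expand_row_zero {R : Type*} [CommRing R]
    (A : Matrix (Fin (2 * n + 2)) (Fin (2 * n + 2)) R) :
    pf (n := n + 1) A = ∑ j : Fin (2 * n + 1),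
      (-1) ^ (j : ℕ) * A 0 j.succ * pf (A.submatrix (skipPair j) (skipPair j)) := by
  simp only [pf_eq_sum, mul_sum, ← sum_product']
  symm
  refine sum_nbij (fun p => pairPerm p.1 p.2) ?_ pairPerm_injective.injOn ?_ ?_
  · rintro ⟨j, τ⟩ h
    exact pairPerm_mem_pfMatchings.2 (mem_product.1 h).2
  · intro σ hσ
    obtain ⟨j, τ, rfl⟩ := exists_pairPerm_eq (apply_zero_of_mem_pfMatchings hσ)
    exact ⟨(j, τ), by simpa using pairPerm_mem_pfMatchings.1 hσ, rfl⟩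
  · rintro ⟨j, τ⟩ -
    rw [Fin.prod_univ_succ]
    simp only [Matrix.submatrix_apply, pairFst_zero, pairSnd_zero, pairFst_succ, pairSnd_succ,
      pairPerm_zero, pairPerm_one, pairPerm_succ_succ, sign_pairPerm, Units.val_mul,
      Units.val_pow_eq_pow_val, Units.val_neg, Units.val_one, Int.cast_mul, Int.cast_pow,
      Int.cast_neg, Int.cast_one]
    ring

end Pfaffian

section DiffProd

/-- The difference product `Δ(x) = ∏_{i<j} (x_i − x_j)`. -/
def diffProd {R : Type*} [CommRing R] {m : ℕ} (x : Fin m → R) : R :=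
  ∏ i, ∏ j ∈ Ioi i, (x i - x j)

variable {m : ℕ}

theorem diffProd_comp_perm {R : Type*} [CommRing R] (x : Fin m → R) (σ : Equiv.Perm (Fin m)) :
    diffProd (x ∘ σ) = ((Equiv.Perm.sign σ : ℤ) : R) * diffProd x :=
  σ.prod_Ioi_comp_eq_sign_mul_prod (f := fun i j => x i - x j) fun _ _ => (neg_sub _ _).symm

theorem diffProd_succ {R : Type*} [CommRing R] (x : Fin (m + 1) → R) :
    diffProd x = (∏ k, (x 0 - x (Fin.succ k))) * diffProd (x ∘ Fin.succ) := by
  simp only [diffProd, Fin.prod_univ_succ, Fin.prod_Ioi_zero, Fin.prod_Ioi_succ,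
    Function.comp_apply]

theorem diffProd_succAbove {R : Type*} [CommRing R] (x : Fin (m + 1) → R) (j : Fin (m + 1)) :
    diffProd x =
      (-1) ^ (j : ℕ) * (∏ k, (x j - x (j.succAbove k))) * diffProd (x ∘ j.succAbove) := by
  have hperm := diffProd_comp_perm x (insertPerm j 1)
  rw [diffProd_succ] at hperm
  have hsucc : (x ∘ insertPerm j 1) ∘ Fin.succ = x ∘ j.succAbove := by ext; simp
  simp only [Function.comp_apply, insertPerm_zero, insertPerm_succ, Equiv.Perm.one_apply, hsucc,
    sign_insertPerm, Equiv.Perm.sign_one, mul_one] at hperm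
  rw [mul_assoc, hperm, ← mul_assoc]
  simp [← mul_pow]

theorem nodalWeight_univ {F : Type*} [Field F] (y : Fin (m + 1) → F) (j : Fin (m + 1)) :
    Lagrange.nodalWeight univ y j = (∏ k, (y j - y (j.succAbove k)))⁻¹ := by
  rw [Lagrange.nodalWeight, ← prod_inv_distrib, ← compl_singleton, ← Fin.image_succAbove_univ,
    prod_image Fin.succAbove_right_injective.injOn]

theorem eval_div_diffProd {F : Type*} [Field F] {x : Fin (m + 2) → F} (hx : Function.Injective x)
    {P : Polynomial F} (hP : P.degree < m + 1) :
    P.eval (x 0) / diffProd x = ∑ j : Fin (m + 1), (-1) ^ (j : ℕ) * P.eval (x j.succ) /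
      ((x 0 - x j.succ) * (∏ k, (x j.succ - x (skipPair j k))) ^ 2 *
        diffProd (x ∘ skipPair j)) := by
  let y : Fin (m + 1) → F := x ∘ Fin.succ
  have hy : Function.Injective y := hx.comp (Fin.succ_injective _)
  have hnode (k : Fin (m + 1)) : x 0 ≠ y k := hx.ne (Fin.succ_ne_zero k).symm
  have hinterp : P.eval (x 0) = (∏ k, (x 0 - y k)) *
      ∑ j, (∏ k, (y j - y (j.succAbove k)))⁻¹ * (x 0 - y j)⁻¹ * P.eval (y j) := by
    conv_lhs => rw [Lagrange.eq_interpolate hy.injOn (s := univ) (f := P) (by simpa using hP)]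
    simp only [Lagrange.eval_interpolate_not_at_node _ fun k _ => hnode k, Lagrange.eval_nodal,
      nodalWeight_univ]
  have hprod : ∏ k, (x 0 - y k) ≠ 0 := prod_ne_zero_iff.2 fun k _ => sub_ne_zero.2 (hnode k)
  have hsucc : diffProd x = (∏ k, (x 0 - y k)) * diffProd y := diffProd_succ x
  rw [hsucc, hinterp, mul_div_mul_left _ _ hprod, sum_div]
  refine sum_congr rfl fun j _ => ?_
  have hsign : ((-1 : F) ^ (j : ℕ))⁻¹ = (-1) ^ (j : ℕ) := by rw [← inv_pow, inv_neg_one]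
  rw [diffProd_succAbove y j]
  change _ = (-1) ^ (j : ℕ) * P.eval (y j) / ((x 0 - y j) *
    (∏ k, (y j - y (j.succAbove k))) ^ 2 * diffProd (y ∘ j.succAbove))
  simp only [div_eq_mul_inv, mul_inv, hsign, sq]
  ring

end DiffProd

section InterlacedVandermonde

open Polynomial

/-- The matrix with rows `(1, a_i, x_i, a_i x_i, x_i², a_i x_i², …)`. For an even number of columns
its columns are, up to order, those of the determinant `V^n(X,1;A,1)`; in this order a row does not
depend on the size of the matrix, and multiplying it by `x_i` shifts it by two columns. -/
def interlacedVandermonde {R : Type*} [CommRing R] {m : ℕ} (x a : Fin m → R) :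
    Matrix (Fin m) (Fin m) R :=
  Matrix.of fun i j => a i ^ (j % 2 : ℕ) * x i ^ (j / 2 : ℕ)

variable {R : Type*} [CommRing R] {m : ℕ}

theorem exists_perm_Vdet_eq (n : ℕ) : ∃ σ : Equiv.Perm (Fin (2 * n)),
    ∀ x a : Fin (2 * n) → R,
      Vdet n x 1 a 1 = ((Equiv.Perm.sign σ : ℤ) : R) * (interlacedVandermonde x a).det := by
  let f (j : Fin (2 * n)) : Fin (2 * n) :=
    ⟨if (j : ℕ) < n then 2 * (n - 1 - j) + 1 else 2 * (2 * n - 1 - j), by split_ifs <;> omega⟩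
  have hf : Function.Injective f := fun i j h => by
    simp only [f, Fin.ext_iff] at h ⊢
    split_ifs at h <;> omega
  refine ⟨Equiv.ofBijective f (Finite.injective_iff_bijective.1 hf), fun x a => ?_⟩
  rw [← Matrix.det_permute', Vdet]
  congr 1
  ext i j
  by_cases hj : (j : ℕ) < n
  · have hdiv : (2 * (n - 1 - j) + 1) / 2 = n - 1 - j := by omega
    simp [interlacedVandermonde, f, hj, hdiv]
  · simp [interlacedVandermonde, f, hj]

theorem Vdet_mul_Vdet (n : ℕ) (x a c : Fin (2 * n) → R) :
    Vdet n x 1 a 1 * Vdet n x 1 c 1 =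
      (interlacedVandermonde x a).det * (interlacedVandermonde x c).det := by
  obtain ⟨σ, hσ⟩ := exists_perm_Vdet_eq (R := R) n
  rw [hσ, hσ, mul_mul_mul_comm, ← Int.cast_mul, ← Units.val_mul, Int.units_mul_self]
  simp

theorem det_interlacedVandermonde_comp_perm (x a : Fin m → R) (σ : Equiv.Perm (Fin m)) :
    (interlacedVandermonde (x ∘ σ) (a ∘ σ)).det =
      ((Equiv.Perm.sign σ : ℤ) : R) * (interlacedVandermonde x a).det :=
  Matrix.det_permute σ (interlacedVandermonde x a)

theorem map_det_interlacedVandermonde {S : Type*} [CommRing S] (f : R →+* S) (x a : Fin m → R) :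
    f (interlacedVandermonde x a).det = (interlacedVandermonde (f ∘ x) (f ∘ a)).det := by
  rw [RingHom.map_det]
  congr 1
  ext i j
  simp [interlacedVandermonde]

theorem natDegree_det_interlacedVandermonde_le (x a : Fin (m + 1) → R) :
    (interlacedVandermonde (Fin.cons X (C ∘ Fin.tail x)) (C ∘ a)).det.natDegree ≤ m / 2 := by
  rw [Matrix.det_succ_row_zero]
  refine natDegree_sum_le_of_forall_le _ _ fun k _ => ?_
  set M := interlacedVandermonde (Fin.cons X (C ∘ Fin.tail x)) (C ∘ a)
  have hminor : M.submatrix Fin.succ k.succAbove =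
      C.mapMatrix ((interlacedVandermonde x a).submatrix Fin.succ k.succAbove) := by
    ext i j
    simp [M, interlacedVandermonde, Fin.tail]
  have hterm : (-1) ^ (k : ℕ) * M 0 k * (M.submatrix Fin.succ k.succAbove).det =
      C ((-1) ^ (k : ℕ) * a 0 ^ (k % 2 : ℕ) *
        ((interlacedVandermonde x a).submatrix Fin.succ k.succAbove).det) * X ^ (k / 2 : ℕ) := by
    rw [hminor, ← RingHom.map_det]
    simp only [M, interlacedVandermonde, Matrix.of_apply, Function.comp_apply, Fin.cons_zero,
      map_mul, map_pow, map_neg, map_one]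
    ring
  rw [hterm]
  exact (natDegree_C_mul_X_pow_le _ _).trans (Nat.div_le_div_right (Nat.le_of_lt_succ k.is_lt))

theorem exists_polynomial_eval_eq_det_interlacedVandermonde (x a : Fin (m + 1) → R) :
    ∃ P : R[X], P.natDegree ≤ m / 2 ∧
      ∀ t, P.eval t = (interlacedVandermonde (Fin.cons t (Fin.tail x)) a).det := by
  refine ⟨_, natDegree_det_interlacedVandermonde_le x a, fun t => ?_⟩
  rw [← coe_evalRingHom, map_det_interlacedVandermonde]
  congr 2 <;> ext i
  · refine Fin.cases ?_ (fun i => ?_) i <;> simp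
  · simp

theorem det_eq_mul_det_succ_of_row_zero (M : Matrix (Fin (m + 1)) (Fin (m + 1)) R)
    (h : ∀ k : Fin m, M 0 k.succ = 0) :
    M.det = M 0 0 * (M.submatrix Fin.succ Fin.succ).det := by
  simp [Matrix.det_succ_row_zero, Fin.sum_univ_succ, h, Fin.succAbove_zero]

theorem det_eq_mul_det_succ_succ_of_rows_zero_one (M : Matrix (Fin (m + 2)) (Fin (m + 2)) R)
    (h0 : ∀ k : Fin m, M 0 k.succ.succ = 0) (h1 : ∀ k : Fin m, M 1 k.succ.succ = 0) :
    M.det = (M 0 0 * M 1 1 - M 0 1 * M 1 0) *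
      (M.submatrix (Fin.succ ∘ Fin.succ) (Fin.succ ∘ Fin.succ)).det := by
  have hminor0 : (M.submatrix Fin.succ (Fin.succAbove 0)).det =
      M 1 1 * (M.submatrix (Fin.succ ∘ Fin.succ) (Fin.succ ∘ Fin.succ)).det := by
    rw [det_eq_mul_det_succ_of_row_zero _ h1]
    rfl
  have hminor1 : (M.submatrix Fin.succ (Fin.succAbove 1)).det =
      M 1 0 * (M.submatrix (Fin.succ ∘ Fin.succ) (Fin.succ ∘ Fin.succ)).det := by
    have hcols : Fin.succAbove (1 : Fin (m + 2)) ∘ Fin.succ = Fin.succ ∘ Fin.succ := by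
      ext k
      simp
    rw [det_eq_mul_det_succ_of_row_zero _ fun k => by simp [h1]]
    simp [hcols]
  rw [Matrix.det_succ_row_zero, Fin.sum_univ_succ, Fin.sum_univ_succ]
  simp only [h0, hminor0, Fin.succ_zero_eq_one, hminor1, mul_zero, zero_mul, sum_const_zero,
    Fin.val_zero, Fin.val_one, pow_zero, pow_one]
  ring

theorem interlacedVandermonde_succ_succ (x a : Fin (m + 2) → R) (i : Fin (m + 2)) (k : Fin m) :
    interlacedVandermonde x a i k.succ.succ =
      x i * interlacedVandermonde x a i k.castSucc.castSucc := by
  have hdiv : ((k : ℕ) + 1 + 1) / 2 = k / 2 + 1 := by omega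
  have hmod : ((k : ℕ) + 1 + 1) % 2 = k % 2 := by omega
  simp only [interlacedVandermonde, Matrix.of_apply, Fin.val_succ, Fin.val_castSucc, hdiv, hmod]
  ring

theorem det_interlacedVandermonde_eq_det_sub_mul (t : R) (x a : Fin (m + 2) → R) :
    (interlacedVandermonde x a).det = (Matrix.of fun i : Fin (m + 2) =>
      (Fin.cons 1 (Fin.cons (a i) fun k =>
        (x i - t) * interlacedVandermonde x a i k.castSucc.castSucc) : Fin (m + 2) → R)).det := by
  -- Right multiplication by `1 - S` subtracts `t` times column `k` from column `k + 2`.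
  let S : Matrix (Fin (m + 2)) (Fin (m + 2)) R :=
    Matrix.of fun j k => if (j : ℕ) + 2 = (k : ℕ) then t else 0
  have hdet : (1 - S).det = 1 := by
    rw [Matrix.det_of_isUpperTriangular]
    · simp [S]
    · intro i j hij
      have hlt : (j : ℕ) < i := hij
      have hne : i ≠ j := (Fin.lt_def.2 hlt).ne'
      have hshift : (i : ℕ) + 2 ≠ j := by omega
      simp [S, hne, hshift]
  symm
  refine Matrix.det_eq_of_eq_mul_det_one (1 - S) hdet (Matrix.ext fun i k => ?_)
  rw [Matrix.mul_sub, Matrix.mul_one, Matrix.sub_apply, Matrix.mul_apply]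
  refine Fin.cases ?_ (Fin.cases ?_ fun k => ?_) k
  · simp [interlacedVandermonde, S]
  · simp [interlacedVandermonde, S]
  · rw [Fintype.sum_eq_single k.castSucc.castSucc]
    · rw [interlacedVandermonde_succ_succ]
      simp only [S, Matrix.of_apply, Fin.cons_succ, Fin.val_succ, Fin.val_castSucc, if_true]
      ring
    · intro j hj
      have hshift : ¬(j : ℕ) + 2 = k.succ.succ := fun h => hj (Fin.ext (by simpa using h))
      simp only [S, Matrix.of_apply, if_neg hshift, mul_zero]

theorem det_interlacedVandermonde_of_eq {x : Fin (m + 2) → R} (a : Fin (m + 2) → R)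
    (hx : x 0 = x 1) :
    (interlacedVandermonde x a).det = (a 1 - a 0) * (∏ k : Fin m, (x k.succ.succ - x 0)) *
      (interlacedVandermonde (x ∘ Fin.succ ∘ Fin.succ) (a ∘ Fin.succ ∘ Fin.succ)).det := by
  rw [det_interlacedVandermonde_eq_det_sub_mul (x 0),
    det_eq_mul_det_succ_succ_of_rows_zero_one _ (by simp) (by simp [hx]),
    mul_assoc (a 1 - a 0), ← Matrix.det_mul_column]
  refine congrArg₂ _ (by simp) (congrArg _ (Matrix.ext fun i k => ?_))
  simp [interlacedVandermonde]

theorem det_interlacedVandermonde_of_eq_succ {x : Fin (m + 2) → R} (a : Fin (m + 2) → R)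
    {j : Fin (m + 1)} (hx : x 0 = x j.succ) :
    (interlacedVandermonde x a).det = (-1) ^ (j : ℕ) *
      ((a j.succ - a 0) * (∏ k, (x (skipPair j k) - x 0)) *
        (interlacedVandermonde (x ∘ skipPair j) (a ∘ skipPair j)).det) := by
  have hperm := det_interlacedVandermonde_comp_perm x a (pairPerm j 1)
  have hskip (y : Fin (m + 2) → R) :
      (y ∘ pairPerm j 1) ∘ Fin.succ ∘ Fin.succ = y ∘ skipPair j := by
    ext
    simp
  rw [det_interlacedVandermonde_of_eq _ (by simpa using hx), hskip, hskip] at hperm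
  simp only [Function.comp_apply, pairPerm_zero, pairPerm_one, pairPerm_succ_succ,
    Equiv.Perm.one_apply, sign_pairPerm, Equiv.Perm.sign_one, mul_one] at hperm
  rw [hperm, ← mul_assoc]
  simp [← mul_pow]

theorem det_mul_det_interlacedVandermonde_of_eq_succ {x : Fin (m + 2) → R}
    (a c : Fin (m + 2) → R) {j : Fin (m + 1)} (hx : x 0 = x j.succ) :
    (interlacedVandermonde x a).det * (interlacedVandermonde x c).det =
      (a 0 - a j.succ) * (c 0 - c j.succ) * (∏ k, (x 0 - x (skipPair j k))) ^ 2 *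
        ((interlacedVandermonde (x ∘ skipPair j) (a ∘ skipPair j)).det *
          (interlacedVandermonde (x ∘ skipPair j) (c ∘ skipPair j)).det) := by
  have hsq : ((-1 : R) ^ (j : ℕ)) ^ 2 = 1 := by rw [← pow_mul', pow_mul, neg_one_sq, one_pow]
  have hprod : (∏ k, (x (skipPair j k) - x 0)) ^ 2 = (∏ k, (x 0 - x (skipPair j k))) ^ 2 := by
    simp only [← prod_pow, sub_sq_comm]
  rw [det_interlacedVandermonde_of_eq_succ a hx, det_interlacedVandermonde_of_eq_succ c hx, ← hprod]
  linear_combination (a 0 - a j.succ) * (c 0 - c j.succ) * (∏ k, (x (skipPair j k) - x 0)) ^ 2 *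
    (interlacedVandermonde (x ∘ skipPair j) (a ∘ skipPair j)).det *
      (interlacedVandermonde (x ∘ skipPair j) (c ∘ skipPair j)).det * hsq

theorem det_mul_det_div_diffProd {F : Type*} [Field F] (hm : Even m) {x : Fin (m + 2) → F}
    (hx : Function.Injective x) (a c : Fin (m + 2) → F) :
    (interlacedVandermonde x a).det * (interlacedVandermonde x c).det / diffProd x =
      ∑ j : Fin (m + 1), (-1) ^ (j : ℕ) *
        ((a 0 - a j.succ) * (c 0 - c j.succ) / (x 0 - x j.succ)) *
        ((interlacedVandermonde (x ∘ skipPair j) (a ∘ skipPair j)).det *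
          (interlacedVandermonde (x ∘ skipPair j) (c ∘ skipPair j)).det /
            diffProd (x ∘ skipPair j)) := by
  obtain ⟨P, hPdeg, hP⟩ := exists_polynomial_eval_eq_det_interlacedVandermonde x a
  obtain ⟨Q, hQdeg, hQ⟩ := exists_polynomial_eval_eq_det_interlacedVandermonde x c
  -- For odd `m` the bound would be `m + 1`, too large for interpolation at `m + 1` nodes.
  have hdeg : (P * Q).natDegree ≤ m := by
    have := natDegree_mul_le (p := P) (q := Q)
    obtain ⟨k, rfl⟩ := hm
    omega
  have hinterp := eval_div_diffProd hx
    (degree_le_of_natDegree_le hdeg |>.trans_lt (by exact_mod_cast m.lt_succ_self))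
  simp only [eval_mul, hP, hQ, Fin.cons_self_tail] at hinterp
  rw [hinterp]
  refine sum_congr rfl fun j _ => ?_
  have hskip : (Fin.cons (x j.succ) (Fin.tail x) : Fin (m + 2) → F) ∘ skipPair j =
      x ∘ skipPair j := by
    ext
    simp [skipPair, Fin.tail]
  have hnode : ∏ k, (x j.succ - x (skipPair j k)) ≠ 0 :=
    prod_ne_zero_iff.2 fun k _ => sub_ne_zero.2 <| hx.ne <|
      (Fin.succ_injective _).ne (Fin.succAbove_ne j k).symm
  rw [det_mul_det_interlacedVandermonde_of_eq_succ a c (j := j) (by simp [Fin.tail]), hskip]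
  simp only [Fin.cons_zero, skipPair, Fin.cons_succ, Fin.tail] at hnode ⊢
  field_simp

end InterlacedVandermonde

theorem pf_eq_det_mul_det_div_diffProd {F : Type*} [Field F] {n : ℕ} {x : Fin (2 * n) → F}
    (hx : Function.Injective x) (a c : Fin (2 * n) → F) :
    pf (Matrix.of fun i j => (a i - a j) * (c i - c j) / (x i - x j)) =
      (interlacedVandermonde x a).det * (interlacedVandermonde x c).det / diffProd x := by
  induction n with
  | zero =>
    have : IsEmpty (Fin (2 * 0)) := Fin.isEmpty
    simp [pf_zero, diffProd]
  | succ n ih =>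
    refine (pf_expand_row_zero _).trans
      (Eq.trans ?_ (det_mul_det_div_diffProd (even_two_mul n) hx a c).symm)
    refine sum_congr rfl fun j _ => ?_
    rw [← ih (hx.comp (skipPair_strictMono j).injective)]
    rfl

/-- `Pf[ (a_i − a_j)(c_i − c_j)/(x_i − x_j) ]
  = V^n(X,1;A,1) V^n(X,1;C,1) / Π_{i<j}(x_i − x_j)`. -/
theorem pf_eq_Vdet_special (F : Type*) [Field F] (n : ℕ) (hn : 1 ≤ n)
    (x a c : Fin (2 * n) → F) (hx : Function.Injective x) :
    pf (Matrix.of fun i j : Fin (2 * n) => (a i - a j) * (c i - c j) / (x i - x j)) =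
      Vdet n x 1 a 1 * Vdet n x 1 c 1 / ∏ i : Fin (2 * n), ∏ j ∈ Ioi i, (x i - x j) := by
  rw [Vdet_mul_Vdet, pf_eq_det_mul_det_div_diffProd hx, diffProd]
end

section
/- Let n ≥ 1 and let x_i, a_i, b_i (1≤i≤2n) be variables and t an indeterminate. Then Pf[ (a_i b_j − a_j b_i)/(1 − t x_i x_j) ]_{1≤i<j≤2n} = (−1)^{n(n−1)/2} t^{n(n−1)/2} V^n(X, 1+tX^2; A, B) / Π_{1≤i<j≤2n}(1 − t x_i x_j). -/
open Finset

/-!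
Let the index set be `Fin n × Fin 2`, and for a permutation `σ` of it consider the signed monomial
`sign σ · ∏ a_{σ(i,0)} b_{σ(i,1)} c_{σ(i,0) σ(i,1)}` with `c_{ij} = 1 / (1 - t x_i x_j)`. It does
not change when the `n` pairs are permuted among themselves. Representing a coset of these
permutations by a sorted matching and `n` swaps, or by an `n`-subset `S` and a permutation of its
complement, and summing, one obtains the Pfaffian on one side and on the other
`∑ ± a_S b_{Sᶜ} det (c_{ij})_{i ∈ S, j ∈ Sᶜ}` over all `S`.

Laplace expansion along the first `n` columns writes `V^n` as the sum over the same `S` of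
`± a_S b_{Sᶜ} V_S V_{Sᶜ}`, with homogeneous Vandermonde determinants
`V_S = ∏ (x_i - x_j) (1 - t x_i x_j)` over the pairs `i < j` in `S`. The Cauchy determinant formula
shows that the two sums agree termwise, up to `t ^ (n choose 2)` and `∏ (1 - t x_i x_j)` over all
pairs.
-/

namespace PfCauchy

open Equiv Equiv.Perm Function

section CosetSums

variable {G K L M : Type*} [Group G] [Group K] [Group L]

lemma bijective_mk_mul {φ : K →* G} {ψ : L →* G} {T : Finset G}
    (hT : ∀ g, ∃! p : K × L, g * φ p.1 * ψ p.2 ∈ T) :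
    Bijective fun p : T × L => ((p.1 * ψ p.2 : G) : G ⧸ φ.range) := by
  constructor
  · rintro ⟨⟨s, hs⟩, l⟩ ⟨⟨s', hs'⟩, l'⟩ h
    obtain ⟨k, hk⟩ := QuotientGroup.eq.1 h
    have hs'_eq : s' = s * ψ l * φ k * ψ l'⁻¹ := by simp [hk, mul_assoc]
    have hkl : (k, l'⁻¹) = (1, l⁻¹) :=
      (hT (s * ψ l)).unique (by simpa [hs'_eq] using hs') (by simpa using hs)
    obtain ⟨rfl, hl⟩ := Prod.mk.inj hkl
    obtain rfl := inv_injective hl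
    simpa using hs'_eq.symm
  · rintro ⟨g⟩
    obtain ⟨⟨k, l⟩, hkl, -⟩ := hT g
    refine ⟨(⟨_, hkl⟩, l⁻¹), QuotientGroup.eq.2 ⟨k⁻¹, ?_⟩⟩
    simp

variable [AddCommMonoid M]

/-- Both sides sum `F` over the cosets of `φ.range`. -/
lemma sum_sum_mul_eq_of_existsUnique [Fintype L] {L' : Type*} [Group L'] [Fintype L'] {φ : K →* G}
    {ψ : L →* G} {ψ' : L' →* G} {T T' : Finset G}
    (hT : ∀ g, ∃! p : K × L, g * φ p.1 * ψ p.2 ∈ T)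
    (hT' : ∀ g, ∃! p : K × L', g * φ p.1 * ψ' p.2 ∈ T')
    {F : G → M} (hF : ∀ g k, F (g * φ k) = F g) :
    ∑ s ∈ T, ∑ l, F (s * ψ l) = ∑ s ∈ T', ∑ l, F (s * ψ' l) := by
  let e := (Equiv.ofBijective _ (bijective_mk_mul hT)).trans
    (Equiv.ofBijective _ (bijective_mk_mul hT')).symm
  have he (p : T × L) : ((p.1 * ψ p.2 : G) : G ⧸ φ.range) = ((e p).1 * ψ' (e p).2 : G) :=
    ((Equiv.ofBijective _ (bijective_mk_mul hT')).apply_symm_apply _).symm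
  rw [← Finset.sum_coe_sort T, ← Finset.sum_coe_sort T', ← Fintype.sum_prod_type',
    ← Fintype.sum_prod_type']
  refine Fintype.sum_equiv e _ _ fun p => ?_
  obtain ⟨k, hk⟩ := QuotientGroup.eq.1 (he p)
  rw [← hF _ k, hk, mul_inv_cancel_left]

lemma sum_eq_sum_sum_mul [Fintype G] [Fintype K] {φ : K →* G} {T : Finset G}
    (hT : ∀ g, ∃! k, g * φ k ∈ T) (F : G → M) :
    ∑ g, F g = ∑ s ∈ T, ∑ k, F (s * φ k) := by
  rw [← Finset.sum_coe_sort T, ← Fintype.sum_prod_type']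
  refine (Bijective.sum_comp (e := fun p : T × K => (p.1 * φ p.2 : G)) ⟨?_, fun g => ?_⟩ F).symm
  · rintro ⟨⟨s, hs⟩, k⟩ ⟨⟨s', hs'⟩, k'⟩ (h : s * φ k = s' * φ k')
    obtain rfl : k = k' := inv_injective <|
      (hT (s * φ k)).unique (by simpa using hs) (by simpa [h] using hs')
    simpa using h
  · obtain ⟨k, hk, -⟩ := hT g
    exact ⟨(⟨_, hk⟩, k⁻¹), by simp⟩

end CosetSums

section ProductPermutations

variable {ι κ : Type*}

/-- The action of `κ → Perm ι` on `ι × κ` permuting the first coordinate, fibrewise over `κ`. -/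
def prodCongrLeftHom (ι κ : Type*) : (κ → Perm ι) →* Perm (ι × κ) where
  toFun := prodCongrLeft
  map_one' := rfl
  map_mul' _ _ := rfl

/-- The action of `ι → Perm κ` on `ι × κ` permuting the second coordinate, fibrewise over `ι`. -/
def prodCongrRightHom (ι κ : Type*) : (ι → Perm κ) →* Perm (ι × κ) where
  toFun := prodCongrRight
  map_one' := rfl
  map_mul' _ _ := rfl

/-- The diagonal action of `Perm ι` on the first coordinate of `ι × κ`. -/
def prodCongrHom (ι κ : Type*) : Perm ι →* Perm (ι × κ) :=
  (prodCongrLeftHom ι κ).comp (Pi.constMonoidHom κ (Perm ι))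

@[simp] lemma prodCongrLeftHom_apply (ρ : κ → Perm ι) (i : ι) (k : κ) :
    prodCongrLeftHom ι κ ρ (i, k) = (ρ k i, k) := rfl

@[simp] lemma prodCongrRightHom_apply (ε : ι → Perm κ) (i : ι) (k : κ) :
    prodCongrRightHom ι κ ε (i, k) = (i, ε i k) := rfl

@[simp] lemma prodCongrHom_apply (ρ : Perm ι) (i : ι) (k : κ) :
    prodCongrHom ι κ ρ (i, k) = (ρ i, k) := rfl

variable [Fintype ι] [Fintype κ] [DecidableEq ι] [DecidableEq κ]

@[simp] lemma sign_prodCongrLeftHom (ρ : κ → Perm ι) :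
    sign (prodCongrLeftHom ι κ ρ) = ∏ k, sign (ρ k) :=
  sign_prodCongrLeft ρ

@[simp] lemma sign_prodCongrRightHom (ε : ι → Perm κ) :
    sign (prodCongrRightHom ι κ ε) = ∏ i, sign (ε i) :=
  sign_prodCongrRight ε

end ProductPermutations

section Transversals

variable {α κ : Type*} [LinearOrder α] {n : ℕ}

lemma existsUnique_strictMono_comp_perm {m : Fin n → α} (hm : Injective m) :
    ∃! ρ : Perm (Fin n), StrictMono (m ∘ ρ) := by
  refine ⟨Tuple.sort m, (Tuple.monotone_sort m).strictMono_of_injective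
    (hm.comp (Tuple.sort m).injective), fun ρ hρ => Equiv.ext fun i => hm ?_⟩
  exact congrFun (Tuple.comp_sort_eq_comp_iff_monotone.2 hρ.monotone) i

/-- The permutations `σ` of `Fin n × κ` for which `f ∘ σ` increases along each fibre over `κ`;
for `κ = Fin 2` these are the shuffles, one for each `n`-element subset of `Fin n × Fin 2`. -/
def shuffles [Fintype κ] [DecidableEq κ] (f : Fin n × κ → α) : Finset (Perm (Fin n × κ)) :=
  {σ | ∀ k, StrictMono fun i => f (σ (i, k))}

/-- `pfMatchings` for the index set `Fin n × Fin 2` ordered through `f`: the `i`-th pair of the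
matching is `{σ (i, 0), σ (i, 1)}`. -/
def sortedMatchings (f : Fin n × Fin 2 → α) : Finset (Perm (Fin n × Fin 2)) :=
  {σ | (∀ i, StrictMono fun k => f (σ (i, k))) ∧ StrictMono fun i => f (σ (i, 0))}

lemma existsUnique_mul_mem_shuffles [Fintype κ] [DecidableEq κ] {f : Fin n × κ → α}
    (hf : Injective f) (σ : Perm (Fin n × κ)) :
    ∃! ρ, σ * prodCongrLeftHom (Fin n) κ ρ ∈ shuffles f := by
  have hsort (k : κ) : ∃! ρ : Perm (Fin n), StrictMono ((fun i => f (σ (i, k))) ∘ ρ) :=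
    existsUnique_strictMono_comp_perm fun i j h => by simpa using hf h
  choose ρ hρ hρ_unique using hsort
  exact ⟨ρ, Finset.mem_filter.2 ⟨Finset.mem_univ _, hρ⟩, fun ρ' hρ' => funext fun k =>
    hρ_unique k _ ((Finset.mem_filter.1 hρ').2 k)⟩

lemma existsUnique_mul_mul_mem_shuffles {f : Fin n × Fin 2 → α} (hf : Injective f)
    (σ : Perm (Fin n × Fin 2)) :
    ∃! p : Perm (Fin n) × Perm (Fin n), σ * prodCongrHom (Fin n) (Fin 2) p.1 *
      (prodCongrLeftHom (Fin n) (Fin 2)).comp (MonoidHom.mulSingle _ 1) p.2 ∈ shuffles f := by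
  have hmul (p : Perm (Fin n) × Perm (Fin n)) : σ * prodCongrHom (Fin n) (Fin 2) p.1 *
      (prodCongrLeftHom (Fin n) (Fin 2)).comp (MonoidHom.mulSingle _ 1) p.2 =
      σ * prodCongrLeftHom (Fin n) (Fin 2) ![p.1, p.1 * p.2] := by
    rw [mul_assoc]
    congr 1
    ext ⟨i, k⟩ <;> fin_cases k <;> simp
  obtain ⟨ρ, hρ, hρ_unique⟩ := existsUnique_mul_mem_shuffles hf σ
  simp only [hmul]
  refine ⟨(ρ 0, (ρ 0)⁻¹ * ρ 1), ?_, ?_⟩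
  · convert hρ using 3
    ext k; fin_cases k <;> simp
  · rintro ⟨π, τ⟩ h
    simp [← hρ_unique _ h]

lemma existsUnique_mul_mul_mem_sortedMatchings {f : Fin n × Fin 2 → α} (hf : Injective f)
    (σ : Perm (Fin n × Fin 2)) :
    ∃! p : Perm (Fin n) × (Fin n → Perm (Fin 2)), σ * prodCongrHom (Fin n) (Fin 2) p.1 *
      prodCongrRightHom (Fin n) (Fin 2) p.2 ∈ sortedMatchings f := by
  have hpair (j : Fin n) : ∃! ε : Perm (Fin 2), StrictMono ((fun k => f (σ (j, k))) ∘ ε) :=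
    existsUnique_strictMono_comp_perm fun k l h => by simpa using hf h
  choose ε hε hε_unique using hpair
  obtain ⟨ρ, hρ, hρ_unique⟩ := existsUnique_strictMono_comp_perm
    (m := fun j => f (σ (j, ε j 0))) fun i j h => (Prod.ext_iff.1 (σ.injective (hf h))).1
  refine ⟨(ρ, ε ∘ ρ), ?_, ?_⟩
  · simpa [sortedMatchings] using ⟨fun i => hε (ρ i), hρ⟩
  · rintro ⟨ρ', ε'⟩ h
    obtain ⟨hpairs, hfirst⟩ := (Finset.mem_filter.1 h).2
    have hε' : ε' = ε ∘ ρ' := funext fun i => hε_unique (ρ' i) _ (hpairs i)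
    subst hε'
    rw [hρ_unique ρ' hfirst]

end Transversals

section OrderedPairs

lemma prod_prod_Ioi_eq_prod_prod_ite {α M : Type*} [LinearOrder α] [Fintype α]
    [LocallyFiniteOrderTop α] [CommMonoid M] (d : α → α → M) :
    ∏ p, ∏ q ∈ Ioi p, d p q = ∏ p, ∏ q, if p < q then d p q else 1 := by
  refine Finset.prod_congr rfl fun p _ => ?_
  rw [← Finset.prod_filter, Finset.filter_lt_eq_Ioi]

lemma prod_prod_Ioi_const {M : Type*} [CommMonoid M] (n : ℕ) (c : M) :
    ∏ i : Fin n, ∏ _j ∈ Ioi i, c = c ^ n.choose 2 := by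
  simp only [Finset.prod_const, Fin.card_Ioi]
  rw [Finset.prod_pow_eq_pow_sum, Fin.sum_univ_eq_sum_range (fun i => n - 1 - i),
    Finset.sum_range_reflect (fun i => i), Finset.sum_range_id, Nat.choose_two_right]

/-- Multiplying `d` by the antisymmetric sign of `j - i` reduces this to the antisymmetric case
`Equiv.Perm.prod_Ioi_comp_eq_sign_mul_prod`. -/
lemma prod_prod_Ioi_comp_perm {R : Type*} [CommRing R] {n : ℕ} (σ : Perm (Fin n))
    {d : Fin n → Fin n → R} (hd : ∀ i j, d i j = d j i) :
    ∏ i, ∏ j ∈ Ioi i, d (σ i) (σ j) = ∏ i, ∏ j ∈ Ioi i, d i j := by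
  let s (i j : Fin n) : R := if i < j then 1 else if j < i then -1 else 0
  have hs_anti (i j : Fin n) : s i j = -s j i := by
    rcases lt_trichotomy i j with h | rfl | h
    · simp [s, h, h.not_gt]
    · simp [s]
    · simp [s, h, h.not_gt]
  have hs_one : ∏ i, ∏ j ∈ Ioi i, s i j = 1 :=
    Finset.prod_eq_one fun i _ => Finset.prod_eq_one fun j hj => if_pos (Finset.mem_Ioi.1 hj)
  have hs : ∏ i, ∏ j ∈ Ioi i, s (σ i) (σ j) = (sign σ : ℤ) := by
    rw [σ.prod_Ioi_comp_eq_sign_mul_prod hs_anti, hs_one, mul_one]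
  have hsd := σ.prod_Ioi_comp_eq_sign_mul_prod (f := fun i j => s i j * d i j) fun i j => by
    rw [hs_anti, hd, neg_mul]
  simp only [Finset.prod_mul_distrib, hs, hs_one, one_mul] at hsd
  exact ((Units.map (Int.castRingHom R).toMonoidHom (sign σ)).isUnit.mul_right_inj).1 hsd

/-- The position of the pair `(i, k)` in a list of `n` consecutive pairs: `2 * i + k`. -/
def pairPos (n : ℕ) : Fin n × Fin 2 ≃ Fin (2 * n) :=
  finProdFinEquiv.trans (finCongr (Nat.mul_comm n 2))

/-- The position of `(i, k)` when the two copies of `Fin n` follow each other: `n * k + i`. -/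
def blockPos (n : ℕ) : Fin n × Fin 2 ≃ Fin (2 * n) :=
  (Equiv.prodComm _ _).trans finProdFinEquiv

variable {n : ℕ}

lemma pairPos_val (i : Fin n) (k : Fin 2) : (pairPos n (i, k) : ℕ) = 2 * i + k := by
  simp [pairPos, add_comm]

lemma blockPos_val (i : Fin n) (k : Fin 2) : (blockPos n (i, k) : ℕ) = n * k + i := by
  simp [blockPos, add_comm]

lemma prod_prod_Ioi_blockPos {M : Type*} [CommMonoid M] (d : Fin (2 * n) → Fin (2 * n) → M) :
    ∏ p, ∏ q ∈ Ioi p, d p q =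
      (∏ k, ∏ i, ∏ j ∈ Ioi i, d (blockPos n (i, k)) (blockPos n (j, k))) *
        ∏ i, ∏ j, d (blockPos n (i, 0)) (blockPos n (j, 1)) := by
  have hsame (k : Fin 2) (i j : Fin n) : blockPos n (i, k) < blockPos n (j, k) ↔ i < j := by
    rw [Fin.lt_def, blockPos_val, blockPos_val, add_lt_add_iff_left, Fin.lt_def]
  have hcross (i j : Fin n) : blockPos n (i, 0) < blockPos n (j, 1) := by
    simp only [Fin.lt_def, blockPos_val, Fin.val_zero, Fin.val_one]; lia
  have hreindex (F : Fin (2 * n) → M) :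
      ∏ p, F p = (∏ i, F (blockPos n (i, 0))) * ∏ i, F (blockPos n (i, 1)) := by
    rw [← (blockPos n).prod_comp, Fintype.prod_prod_type_right, Fin.prod_univ_two]
  simp only [prod_prod_Ioi_eq_prod_prod_ite]
  rw [hreindex]
  simp only [hreindex, Fin.prod_univ_two, hsame, hcross, (hcross _ _).not_gt, if_true, if_false,
    Finset.prod_const_one, one_mul, Finset.prod_mul_distrib]
  exact mul_right_comm _ _ _

/-- The permutation taking the blockwise order of `Fin n × Fin 2` to the pairwise order. -/
def shufflePerm (n : ℕ) : Perm (Fin (2 * n)) :=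
  (blockPos n).symm.trans (pairPos n)

@[simp] lemma shufflePerm_blockPos (p : Fin n × Fin 2) :
    shufflePerm n (blockPos n p) = pairPos n p := by
  simp [shufflePerm]

lemma prod_prod_Ioi_eq_of_symm {R : Type*} [CommRing R] {d : Fin (2 * n) → Fin (2 * n) → R}
    (hd : ∀ p q, d p q = d q p) (w : Fin n × Fin 2 ≃ Fin (2 * n)) :
    ∏ p, ∏ q ∈ Ioi p, d p q = (∏ k, ∏ i, ∏ j ∈ Ioi i, d (w (i, k)) (w (j, k))) *
      ∏ i, ∏ j, d (w (i, 0)) (w (j, 1)) := by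
  rw [← prod_prod_Ioi_comp_perm ((blockPos n).symm.trans w) hd, prod_prod_Ioi_blockPos]
  simp

lemma sign_shufflePerm (n : ℕ) : sign (shufflePerm n) = (-1) ^ n.choose 2 := by
  have hsame (k : Fin 2) (i j : Fin n) : pairPos n (i, k) < pairPos n (j, k) ↔ i < j := by
    rw [Fin.lt_def, pairPos_val, pairPos_val, Fin.lt_def]; lia
  have hcross (i j : Fin n) : pairPos n (i, 0) < pairPos n (j, 1) ↔ ¬ j < i := by
    simp only [Fin.lt_def, pairPos_val, Fin.val_zero, Fin.val_one]; lia
  have hone (i : Fin n) : ∏ j ∈ Ioi i, (if i < j then (1 : ℤˣ) else -1) = 1 :=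
    Finset.prod_eq_one fun j hj => if_pos (Finset.mem_Ioi.1 hj)
  rw [sign_eq_prod_prod_Ioi, prod_prod_Ioi_blockPos]
  simp only [shufflePerm_blockPos, hsame, hcross, ite_not, hone, Finset.prod_const_one, one_mul]
  rw [Finset.prod_comm, ← prod_prod_Ioi_const, prod_prod_Ioi_eq_prod_prod_ite]

end OrderedPairs

section PairingSums

variable {R ι : Type*} [CommRing R] [Fintype ι] [DecidableEq ι]

/-- The signed monomial of `σ` in which `a` is evaluated on the first and `b` on the second entries
of the pairs `(σ (i, 0), σ (i, 1))`, and `c` on the pairs. -/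
def pairingTerm (a b : ι × Fin 2 → R) (c : ι × Fin 2 → ι × Fin 2 → R) (σ : Perm (ι × Fin 2)) : R :=
  (sign σ : ℤ) * ∏ i, a (σ (i, 0)) * b (σ (i, 1)) * c (σ (i, 0)) (σ (i, 1))

variable (a b : ι × Fin 2 → R) (c : ι × Fin 2 → ι × Fin 2 → R) (σ : Perm (ι × Fin 2))

lemma pairingTerm_mul_prodCongrHom (ρ : Perm ι) :
    pairingTerm a b c (σ * prodCongrHom ι (Fin 2) ρ) = pairingTerm a b c σ := by
  have hsign : sign (prodCongrHom ι (Fin 2) ρ) = 1 := by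
    simp [prodCongrHom]
  simp only [pairingTerm, map_mul, hsign, mul_one, Perm.mul_apply, prodCongrHom_apply]
  rw [Equiv.prod_comp ρ fun i => a (σ (i, 0)) * b (σ (i, 1)) * c (σ (i, 0)) (σ (i, 1))]

lemma sum_pairingTerm_mul_prodCongrRightHom (hc : ∀ p q, c p q = c q p) :
    ∑ ε, pairingTerm a b c (σ * prodCongrRightHom ι (Fin 2) ε) =
      (sign σ : ℤ) * ∏ i, (a (σ (i, 0)) * b (σ (i, 1)) - a (σ (i, 1)) * b (σ (i, 0))) *
        c (σ (i, 0)) (σ (i, 1)) := by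
  have hpair (i : ι) : (a (σ (i, 0)) * b (σ (i, 1)) - a (σ (i, 1)) * b (σ (i, 0))) *
      c (σ (i, 0)) (σ (i, 1)) = ∑ τ : Perm (Fin 2), (sign τ : ℤ) *
        (a (σ (i, τ 0)) * b (σ (i, τ 1)) * c (σ (i, τ 0)) (σ (i, τ 1))) := by
    have huniv : (univ : Finset (Perm (Fin 2))) = {1, swap 0 1} := by decide
    rw [huniv, Finset.sum_pair (by decide)]
    simp only [Perm.sign_one, Perm.one_apply, sign_swap Fin.zero_ne_one, swap_apply_left,
      swap_apply_right, Units.val_one, Units.val_neg, Int.cast_one, Int.cast_neg, hc (σ (i, 1))]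
    ring
  simp only [hpair, Finset.prod_univ_sum, Fintype.piFinset_univ, Finset.mul_sum]
  refine Finset.sum_congr rfl fun ε _ => ?_
  simp only [pairingTerm, map_mul, sign_prodCongrRightHom, Units.val_mul, Units.coe_prod,
    Int.cast_mul, Int.cast_prod, Perm.mul_apply, prodCongrRightHom_apply, Finset.prod_mul_distrib]
  ring

lemma sum_pairingTerm_mul_prodCongrLeftHom :
    ∑ ρ, pairingTerm a b c
        (σ * (prodCongrLeftHom ι (Fin 2)).comp (MonoidHom.mulSingle _ 1) ρ) =
      (sign σ : ℤ) * ((∏ i, a (σ (i, 0))) * (∏ i, b (σ (i, 1))) *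
        (Matrix.of fun i j => c (σ (i, 0)) (σ (j, 1))).det) := by
  rw [← Matrix.det_transpose, Matrix.det_apply', Finset.mul_sum, Finset.mul_sum]
  refine Finset.sum_congr rfl fun ρ _ => ?_
  have hsign : sign ((prodCongrLeftHom ι (Fin 2)).comp (MonoidHom.mulSingle _ 1) ρ) = sign ρ := by
    simp
  have hfirst (i : ι) :
      (prodCongrLeftHom ι (Fin 2)).comp (MonoidHom.mulSingle _ 1) ρ (i, 0) = (i, 0) := by simp
  have hsecond (i : ι) :
      (prodCongrLeftHom ι (Fin 2)).comp (MonoidHom.mulSingle _ 1) ρ (i, 1) = (ρ i, 1) := by simp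
  simp only [pairingTerm, map_mul, Perm.mul_apply, hsign, hfirst, hsecond, Units.val_mul,
    Int.cast_mul, Finset.prod_mul_distrib, Equiv.prod_comp ρ fun i => b (σ (i, 1)),
    Matrix.transpose_apply, Matrix.of_apply]
  ring

end PairingSums

section Pfaffian

variable {R : Type*} [CommRing R] {n : ℕ}

lemma sum_sortedMatchings_eq_sum_shuffles {α : Type*} [LinearOrder α] {f : Fin n × Fin 2 → α}
    (hf : Injective f) (a b : Fin n × Fin 2 → R) {c : Fin n × Fin 2 → Fin n × Fin 2 → R}
    (hc : ∀ p q, c p q = c q p) :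
    ∑ σ ∈ sortedMatchings f, ((sign σ : ℤ) : R) *
        ∏ i, (a (σ (i, 0)) * b (σ (i, 1)) - a (σ (i, 1)) * b (σ (i, 0))) *
          c (σ (i, 0)) (σ (i, 1)) =
      ∑ σ ∈ shuffles f, ((sign σ : ℤ) : R) * ((∏ i, a (σ (i, 0))) * (∏ i, b (σ (i, 1))) *
        (Matrix.of fun i j => c (σ (i, 0)) (σ (j, 1))).det) := by
  simp only [← sum_pairingTerm_mul_prodCongrRightHom a b c _ hc,
    ← sum_pairingTerm_mul_prodCongrLeftHom]
  exact sum_sum_mul_eq_of_existsUnique (existsUnique_mul_mul_mem_sortedMatchings hf)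
    (existsUnique_mul_mul_mem_shuffles hf) (pairingTerm_mul_prodCongrHom a b c)

lemma pf_eq_sum_sortedMatchings (A : Matrix (Fin (2 * n)) (Fin (2 * n)) R) :
    pf A = ∑ σ ∈ sortedMatchings (pairPos n), ((sign σ : ℤ) : R) *
      ∏ i, A (pairPos n (σ (i, 0))) (pairPos n (σ (i, 1))) := by
  have hfirst (i : Fin n) (h : 2 * i.1 < 2 * n) : (⟨2 * i.1, h⟩ : Fin (2 * n)) = pairPos n (i, 0) :=
    Fin.ext (pairPos_val i 0).symm
  have hsecond (i : Fin n) (h : 2 * i.1 + 1 < 2 * n) :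
      (⟨2 * i.1 + 1, h⟩ : Fin (2 * n)) = pairPos n (i, 1) :=
    Fin.ext (pairPos_val i 1).symm
  simp only [pf, hfirst, hsecond]
  refine (Finset.sum_equiv (pairPos n).permCongr (fun σ => ?_) fun σ _ => ?_).symm
  · simp [sortedMatchings, pfMatchings, hfirst, hsecond, StrictMono]
  · simp

lemma pf_eq_sum_shuffles (a b : Fin (2 * n) → R) {c : Fin (2 * n) → Fin (2 * n) → R}
    (hc : ∀ i j, c i j = c j i) :
    pf (Matrix.of fun i j => (a i * b j - a j * b i) * c i j) =
      ∑ σ ∈ shuffles (pairPos n), ((sign σ : ℤ) : R) *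
        ((∏ i, a (pairPos n (σ (i, 0)))) * (∏ i, b (pairPos n (σ (i, 1)))) *
          (Matrix.of fun i j => c (pairPos n (σ (i, 0))) (pairPos n (σ (j, 1)))).det) := by
  simpa only [pf_eq_sum_sortedMatchings, Matrix.of_apply, comp_apply] using
    sum_sortedMatchings_eq_sum_shuffles (pairPos n).injective (a ∘ pairPos n) (b ∘ pairPos n)
      (c := fun p q => c (pairPos n p) (pairPos n q)) fun _ _ => hc _ _

end Pfaffian

section Laplace

variable {R : Type*} [CommRing R] {n : ℕ}

lemma det_eq_sum_shuffles {α κ : Type*} [LinearOrder α] [Fintype κ] [DecidableEq κ]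
    {f : Fin n × κ → α} (hf : Injective f) (M : Matrix (Fin n × κ) (Fin n × κ) R) :
    M.det = ∑ σ ∈ shuffles f,
      (sign σ : ℤ) * ∏ k, (Matrix.of fun i j => M (σ (i, k)) (j, k)).det := by
  rw [Matrix.det_apply', sum_eq_sum_sum_mul (existsUnique_mul_mem_shuffles hf)]
  refine Finset.sum_congr rfl fun σ _ => ?_
  simp only [Matrix.det_apply', Finset.prod_univ_sum, Fintype.piFinset_univ, Finset.mul_sum]
  refine Finset.sum_congr rfl fun ρ _ => ?_
  simp only [map_mul, sign_prodCongrLeftHom, Units.val_mul, Units.coe_prod, Int.cast_mul,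
    Int.cast_prod, Perm.mul_apply, Fintype.prod_prod_type_right, prodCongrLeftHom_apply,
    Matrix.of_apply, Finset.prod_mul_distrib]
  ring

lemma det_submatrix_pairPos_blockPos (M : Matrix (Fin (2 * n)) (Fin (2 * n)) R) :
    (M.submatrix (pairPos n) (blockPos n)).det = (-1) ^ n.choose 2 * M.det := by
  have hsub : M.submatrix (pairPos n) (blockPos n) =
      (M.submatrix (shufflePerm n) id).submatrix (blockPos n) (blockPos n) := by
    ext; simp
  rw [hsub, Matrix.det_submatrix_equiv_self, Matrix.det_permute, sign_shufflePerm]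
  simp

lemma Vdet_eq_sum_shuffles (x y a b : Fin (2 * n) → R) :
    Vdet n x y a b = (-1) ^ n.choose 2 * ∑ σ ∈ shuffles (pairPos n), (sign σ : ℤ) *
      ((∏ i, a (pairPos n (σ (i, 0)))) * (∏ i, b (pairPos n (σ (i, 1)))) *
        ∏ k, (Matrix.projVandermonde (fun i => y (pairPos n (σ (i, k))))
          fun i => x (pairPos n (σ (i, k)))).det) := by
  let M : Matrix (Fin (2 * n)) (Fin (2 * n)) R := Matrix.of fun i j =>
    if (j : ℕ) < n then a i * x i ^ (n - 1 - (j : ℕ)) * y i ^ (j : ℕ)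
    else b i * x i ^ (2 * n - 1 - (j : ℕ)) * y i ^ ((j : ℕ) - n)
  have hentry (p : Fin (2 * n)) (j : Fin n) (k : Fin 2) :
      M p (blockPos n (j, k)) = ![a, b] k p * (y p ^ (j : ℕ) * x p ^ (j.rev : ℕ)) := by
    have hfirst : n - 1 - (j : ℕ) = n - (j + 1) := by lia
    have hsecond : 2 * n - 1 - (n + (j : ℕ)) = n - (j + 1) := by lia
    fin_cases k <;>
      simp [M, blockPos_val, Fin.val_rev, hfirst, hsecond, mul_assoc, mul_comm (y p ^ _)]
  have hblock (σ : Perm (Fin n × Fin 2)) (k : Fin 2) :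
      (Matrix.of fun i j => M (pairPos n (σ (i, k))) (blockPos n (j, k))).det =
        (∏ i, ![a, b] k (pairPos n (σ (i, k)))) *
          (Matrix.projVandermonde (fun i => y (pairPos n (σ (i, k))))
            fun i => x (pairPos n (σ (i, k)))).det := by
    simp only [hentry, ← Matrix.det_mul_column, Matrix.projVandermonde_apply]
  have hlaplace := det_eq_sum_shuffles (pairPos n).injective (M.submatrix (pairPos n) (blockPos n))
  rw [det_submatrix_pairPos_blockPos] at hlaplace
  simp only [Matrix.submatrix_apply, hblock, Finset.prod_mul_distrib, Fin.prod_univ_two] at hlaplace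
  simp only [Fin.prod_univ_two]
  calc Vdet n x y a b = (-1) ^ n.choose 2 * ((-1) ^ n.choose 2 * M.det) := by
        rw [← mul_assoc, ← mul_pow]; simp [Vdet, M]
    _ = _ := by rw [hlaplace]; simp

end Laplace

section CauchyDeterminant

variable {R : Type*} [CommRing R] {n : ℕ}

lemma det_eq_mul_det_schur (M : Matrix (Fin (n + 1)) (Fin (n + 1)) R) {d : R} (hd : M 0 0 * d = 1) :
    M.det = M 0 0 * (Matrix.of fun i j : Fin n =>
      M i.succ j.succ - M i.succ 0 * d * M 0 j.succ).det := by
  let B : Matrix (Fin (n + 1)) (Fin (n + 1)) R :=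
    Matrix.of fun i j => if i = 0 then M 0 j else M i j - M i 0 * d * M 0 j
  have hdet : M.det = B.det :=
    Matrix.det_eq_of_forall_row_eq_smul_add_const (fun i => if i = 0 then 0 else M i 0 * d) 0
      (by simp) fun i j => by by_cases h : i = 0 <;> simp [B, h]
  have hpivot (i : Fin n) : B i.succ 0 = 0 := by
    simp only [B, Matrix.of_apply, Fin.succ_ne_zero, if_false]
    linear_combination -M i.succ 0 * hd
  rw [hdet, Matrix.det_succ_column_zero, Fin.sum_univ_succ]
  simp [hpivot, B, Matrix.submatrix]

lemma det_cauchy_succ {t : R} {u v : Fin (n + 1) → R}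
    {c : Fin (n + 1) → Fin (n + 1) → R} (hc : ∀ i j, c i j * (1 - t * u i * v j) = 1) :
    (Matrix.of c).det = c 0 0 * ((∏ i : Fin n, t * (u 0 - u i.succ) * c i.succ 0) *
      ((∏ j : Fin n, (v 0 - v j.succ) * c 0 j.succ) *
        (Matrix.of fun i j : Fin n => c i.succ j.succ).det)) := by
  have hschur (i j : Fin n) : c i.succ j.succ - c i.succ 0 * (1 - t * u 0 * v 0) * c 0 j.succ =
      t * (u 0 - u i.succ) * c i.succ 0 * ((v 0 - v j.succ) * c 0 j.succ * c i.succ j.succ) := by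
    calc _ = c i.succ j.succ * (c i.succ 0 * (1 - t * u i.succ * v 0)) *
            (c 0 j.succ * (1 - t * u 0 * v j.succ)) -
          c i.succ 0 * (1 - t * u 0 * v 0) * c 0 j.succ *
            (c i.succ j.succ * (1 - t * u i.succ * v j.succ)) := by simp [hc]
      _ = _ := by ring
  rw [det_eq_mul_det_schur (Matrix.of c) (hc 0 0), ← Matrix.det_mul_row, ← Matrix.det_mul_column]
  simp only [Matrix.of_apply, hschur]

lemma det_cauchy_mul_prod_prod {t : R} {u v : Fin n → R} {c : Fin n → Fin n → R}
    (hc : ∀ i j, c i j * (1 - t * u i * v j) = 1) :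
    (Matrix.of c).det * ∏ i, ∏ j, (1 - t * u i * v j) =
      t ^ n.choose 2 * ((∏ i, ∏ j ∈ Ioi i, (u i - u j)) * ∏ i, ∏ j ∈ Ioi i, (v i - v j)) := by
  induction n with
  | zero => simp
  | succ n ih =>
    have hcol : (∏ i : Fin n, c i.succ 0) * ∏ i : Fin n, (1 - t * u i.succ * v 0) = 1 := by
      simp [← Finset.prod_mul_distrib, hc]
    have hrow : (∏ j : Fin n, c 0 j.succ) * ∏ j : Fin n, (1 - t * u 0 * v j.succ) = 1 := by
      simp [← Finset.prod_mul_distrib, hc]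
    have hminor := ih (fun i j => hc i.succ j.succ)
    have hchoose : (n + 1).choose 2 = n + n.choose 2 := by
      rw [Nat.choose_succ_succ' n 1, Nat.choose_one_right]
    rw [det_cauchy_succ hc, hchoose]
    simp only [Fin.prod_univ_succ, Fin.prod_Ioi_zero, Fin.prod_Ioi_succ, Finset.prod_mul_distrib,
      Finset.prod_const, Finset.card_univ, Fintype.card_fin]
    calc _ = t ^ n * (∏ i : Fin n, (u 0 - u i.succ)) * (∏ j : Fin n, (v 0 - v j.succ)) *
          (c 0 0 * (1 - t * u 0 * v 0)) *
          ((∏ i : Fin n, c i.succ 0) * ∏ i : Fin n, (1 - t * u i.succ * v 0)) *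
          ((∏ j : Fin n, c 0 j.succ) * ∏ j : Fin n, (1 - t * u 0 * v j.succ)) *
          ((Matrix.of fun i j : Fin n => c i.succ j.succ).det *
            ∏ i : Fin n, ∏ j : Fin n, (1 - t * u i.succ * v j.succ)) := by ring
      _ = _ := by rw [hc, hcol, hrow, hminor]; ring

lemma det_projVandermonde_one_add (t : R) (u : Fin n → R) :
    (Matrix.projVandermonde (fun i => 1 + t * u i ^ 2) u).det =
      (∏ i, ∏ j ∈ Ioi i, (u i - u j)) * ∏ i, ∏ j ∈ Ioi i, (1 - t * u i * u j) := by
  simp only [Matrix.det_projVandermonde, ← Finset.prod_mul_distrib]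
  refine Finset.prod_congr rfl fun i _ => Finset.prod_congr rfl fun j _ => ?_
  ring

end CauchyDeterminant

section CauchyPfaffian

variable {R : Type*} [CommRing R] {n : ℕ}

lemma det_mul_prod_prod_Ioi {t : R} {x : Fin (2 * n) → R} {c : Fin (2 * n) → Fin (2 * n) → R}
    (hc : ∀ i j, i ≠ j → c i j * (1 - t * x i * x j) = 1) (w : Fin n × Fin 2 ≃ Fin (2 * n)) :
    (Matrix.of fun i j => c (w (i, 0)) (w (j, 1))).det *
        ∏ i, ∏ j ∈ Ioi i, (1 - t * x i * x j) =
      t ^ n.choose 2 * ∏ k, (Matrix.projVandermonde (fun i => 1 + t * x (w (i, k)) ^ 2)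
        fun i => x (w (i, k))).det := by
  have hcauchy := det_cauchy_mul_prod_prod
    (u := fun i => x (w (i, 0))) (v := fun i => x (w (i, 1)))
    fun i j => hc (w (i, 0)) (w (j, 1)) (by simp)
  rw [prod_prod_Ioi_eq_of_symm (d := fun i j => 1 - t * x i * x j) (fun i j => by ring) w]
  simp only [Fin.prod_univ_two, det_projVandermonde_one_add]
  linear_combination ((∏ i, ∏ j ∈ Ioi i, (1 - t * x (w (i, 0)) * x (w (j, 0)))) *
    ∏ i, ∏ j ∈ Ioi i, (1 - t * x (w (i, 1)) * x (w (j, 1)))) * hcauchy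

lemma pf_mul_prod_prod_Ioi {t : R} {x : Fin (2 * n) → R} {c : Fin (2 * n) → Fin (2 * n) → R}
    (hsymm : ∀ i j, c i j = c j i) (hc : ∀ i j, i ≠ j → c i j * (1 - t * x i * x j) = 1)
    (a b : Fin (2 * n) → R) :
    pf (Matrix.of fun i j => (a i * b j - a j * b i) * c i j) *
        ∏ i, ∏ j ∈ Ioi i, (1 - t * x i * x j) =
      (-1) ^ n.choose 2 * t ^ n.choose 2 * Vdet n x (fun i => 1 + t * x i ^ 2) a b := by
  have hsign : (-1 : R) ^ n.choose 2 * (-1) ^ n.choose 2 = 1 := by simp [← mul_pow]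
  rw [pf_eq_sum_shuffles a b hsymm, Vdet_eq_sum_shuffles, mul_mul_mul_comm, hsign, one_mul,
    Finset.sum_mul, Finset.mul_sum]
  refine Finset.sum_congr rfl fun σ _ => ?_
  have hblock := det_mul_prod_prod_Ioi hc (σ.trans (pairPos n))
  simp only [Equiv.trans_apply] at hblock
  linear_combination (sign σ : ℤ) * ((∏ i, a (pairPos n (σ (i, 0)))) *
    ∏ i, b (pairPos n (σ (i, 1)))) * hblock

end CauchyPfaffian

end PfCauchy

open PfCauchy in
theorem pf_cauchy_general {R : Type*} [CommRing R] (n : ℕ) (t : R) (x a b : Fin (2 * n) → R)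
    (ht : ∀ i j, i ≠ j → IsUnit (1 - t * x i * x j)) :
    pf (Matrix.of fun i j => (a i * b j - a j * b i) * Ring.inverse (1 - t * x i * x j)) =
      (-1) ^ n.choose 2 * t ^ n.choose 2 * Vdet n x (fun i => 1 + t * x i ^ 2) a b *
        Ring.inverse (∏ i, ∏ j ∈ Ioi i, (1 - t * x i * x j)) := by
  have hD : IsUnit (∏ i, ∏ j ∈ Ioi i, (1 - t * x i * x j)) :=
    Finset.prod_induction _ IsUnit (fun _ _ => IsUnit.mul) isUnit_one fun i _ =>
      Finset.prod_induction _ IsUnit (fun _ _ => IsUnit.mul) isUnit_one fun j hj =>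
        ht i j (Finset.mem_Ioi.1 hj).ne
  rw [Ring.eq_mul_inverse_iff_mul_eq _ _ _ hD]
  exact pf_mul_prod_prod_Ioi (fun i j => by rw [mul_right_comm])
    (fun i j hij => Ring.inverse_mul_cancel _ (ht i j hij)) a b

/-- Corollary `cor:pfaff-det`, equation `eq:cauchy`:
`Pf[ (a_i b_j − a_j b_i)/(1 − t x_i x_j) ]
  = (−1)^{n(n−1)/2} t^{n(n−1)/2} V^n(X,1+tX²;A,B) / Π_{i<j}(1 − t x_i x_j)`. -/
theorem pf_cauchy (F : Type*) [Field F] (n : ℕ) (hn : 1 ≤ n)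
    (x a b : Fin (2 * n) → F) (t : F)
    (ht : ∀ i j : Fin (2 * n), i ≠ j → 1 - t * x i * x j ≠ 0) :
    pf (Matrix.of fun i j : Fin (2 * n) => (a i * b j - a j * b i) / (1 - t * x i * x j)) =
      (-1) ^ n.choose 2 * t ^ n.choose 2 * Vdet n x (fun i => 1 + t * x i ^ 2) a b /
        ∏ i : Fin (2 * n), ∏ j ∈ Ioi i, (1 - t * x i * x j) := by
  simpa [Ring.inverse_eq_inv', ← div_eq_mul_inv] using
    pf_cauchy_general n t x a b fun i j hij => (ht i j hij).isUnit
end
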